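/- Let H be a Hopf algebra over a field k and let e ∈ H satisfy e·e_{(1)} ⊗ e_{(2)} = e ⊗ e = e_{(1)}·e ⊗ e_{(2)} in H ⊗ H. Let A be the smallest right coideal subalgebra of H containing e. Then: (i) e is a two-sided integral for A, i.e. a·e = ε(a)·e = e·a for all a ∈ A; (ii) for all x, y ∈ H with x − y ∈ H·A⁺ one has x·e = y·e. -/

import Mathlib

open TensorProduct

/-!
For a linear map `F : C → M` out of a coalgebra and `m : M`, the elements `a` with
`F(a₍₁₎) ⊗ a₍₂₎ = m ⊗ a` satisfy `F a = ε(a) m` (apply `id ⊗ ε`) and, when `C` is flat, form a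
right coideal: by coassociativity `Δ(a)` equalizes the two defining maps tensored with `C`, and
flatness commutes this equalizer with `- ⊗ C`. When `F` is left or right multiplication by an
element `e` of a bialgebra and `m = e`, these elements form a subalgebra, and the hypotheses on `e`
say exactly that `e` lies in both subalgebras. Hence both contain `A`, and every `a ∈ A` satisfies
`a e = ε(a) e = e a`; in particular `h a e = 0` for `h ∈ H` and `a ∈ A⁺`.
-/

section Tensor

variable {R : Type*} [CommSemiring R]

theorem range_rTensor_subtype {M : Type*} [AddCommMonoid M] [Module R M]
    (N : Type*) [AddCommMonoid N] [Module R N] (V : Submodule R M) :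
    LinearMap.range (V.subtype.rTensor N) =
      Submodule.span R {x : M ⊗[R] N | ∃ b ∈ V, ∃ h : N, x = b ⊗ₜ[R] h} := by
  rw [LinearMap.rTensor, TensorProduct.range_map_eq_span_tmul]
  congr 1
  ext x
  simp [eq_comm]

theorem rTensor_mulLeft {A B : Type*} [Semiring A] [Algebra R A] [Semiring B] [Algebra R B]
    (a : A) : (LinearMap.mulLeft R a).rTensor B = LinearMap.mulLeft R (a ⊗ₜ[R] (1 : B)) := by
  ext
  simp

theorem rTensor_mulRight {A B : Type*} [Semiring A] [Algebra R A] [Semiring B] [Algebra R B]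
    (a : A) : (LinearMap.mulRight R a).rTensor B = LinearMap.mulRight R (a ⊗ₜ[R] (1 : B)) := by
  ext
  simp

end Tensor

theorem mem_range_rTensor_subtype_eqLocus {R M M' N : Type*} [CommRing R]
    [AddCommGroup M] [Module R M] [AddCommGroup M'] [Module R M'] [AddCommGroup N] [Module R N]
    [Module.Flat R N] {f g : M →ₗ[R] M'} {t : M ⊗[R] N} (h : f.rTensor N t = g.rTensor N t) :
    t ∈ LinearMap.range ((LinearMap.eqLocus f g).subtype.rTensor N) := by
  rw [LinearMap.eqLocus_eq_ker_sub]
  refine (Module.Flat.rTensor_exact N (LinearMap.exact_subtype_ker_map (f - g)) t).mp ?_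
  rw [LinearMap.rTensor_sub, LinearMap.sub_apply, h, sub_self]

section Coalgebra

variable {R C M : Type*}

/-- A submodule `V` of a coalgebra `C` is a right coideal if `Δ(V)` lies in the image of `V ⊗ C` in
`C ⊗ C`, the span of the tensors `b ⊗ h` with `b ∈ V`. -/
def IsRightCoideal [CommSemiring R] [AddCommMonoid C] [Module R C] [Coalgebra R C]
    (V : Submodule R C) : Prop :=
  ∀ a ∈ V, Coalgebra.comul (R := R) a ∈
    Submodule.span R {x : C ⊗[R] C | ∃ b ∈ V, ∃ h : C, x = b ⊗ₜ[R] h}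

/-- The elements `a` with `F(a₍₁₎) ⊗ a₍₂₎ = m ⊗ a`. If `C` is flat, this is the largest right
coideal on which `F` is equal to `a ↦ ε(a) m`. -/
def integralCoideal [CommSemiring R] [AddCommMonoid C] [Module R C] [Coalgebra R C]
    [AddCommMonoid M] [Module R M] (F : C →ₗ[R] M) (m : M) : Submodule R C :=
  LinearMap.eqLocus (F.rTensor C ∘ₗ Coalgebra.comul) (TensorProduct.mk R M C m)

section Semiring

variable [CommSemiring R] [AddCommMonoid C] [Module R C] [Coalgebra R C]
  [AddCommMonoid M] [Module R M] {F : C →ₗ[R] M} {m : M} {a : C}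

theorem mem_integralCoideal :
    a ∈ integralCoideal F m ↔ F.rTensor C (Coalgebra.comul (R := R) a) = m ⊗ₜ[R] a :=
  Iff.rfl

theorem apply_eq_counit_smul_of_mem_integralCoideal (ha : a ∈ integralCoideal F m) :
    F a = Coalgebra.counit (R := R) a • m := by
  apply (TensorProduct.rid R M).symm.injective
  calc (TensorProduct.rid R M).symm (F a)
      = F.rTensor R (Coalgebra.counit.lTensor C (Coalgebra.comul (R := R) a)) := by
        simp [Coalgebra.lTensor_counit_comul]
    _ = Coalgebra.counit.lTensor M (F.rTensor C (Coalgebra.comul (R := R) a)) := by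
        rw [← LinearMap.comp_apply, LinearMap.rTensor_comp_lTensor,
          ← LinearMap.lTensor_comp_rTensor, LinearMap.comp_apply]
    _ = (TensorProduct.rid R M).symm (Coalgebra.counit (R := R) a • m) := by
        rw [mem_integralCoideal.mp ha]
        rw [LinearMap.lTensor_tmul, TensorProduct.rid_symm_apply, TensorProduct.smul_tmul,
          smul_eq_mul, mul_one]

theorem rTensor_comul_eq_of_mem_integralCoideal (ha : a ∈ integralCoideal F m) :
    (F.rTensor C ∘ₗ Coalgebra.comul).rTensor C (Coalgebra.comul (R := R) a) =
      (TensorProduct.mk R M C m).rTensor C (Coalgebra.comul (R := R) a) := by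
  apply (TensorProduct.assoc R M C C).injective
  have assoc_rTensor (t : (C ⊗[R] C) ⊗[R] C) :
      TensorProduct.assoc R M C C ((F.rTensor C).rTensor C t) =
        F.rTensor (C ⊗[R] C) (TensorProduct.assoc R C C C t) := by
    rw [LinearMap.rTensor_tensor]
    simp
  have assoc_mk (t : C ⊗[R] C) :
      TensorProduct.assoc R M C C ((TensorProduct.mk R M C m).rTensor C t) = m ⊗ₜ[R] t := by
    induction t with
    | zero => simp
    | add x y hx hy => simp only [map_add, hx, hy, TensorProduct.tmul_add]
    | tmul x y => simp
  calc TensorProduct.assoc R M C C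
        ((F.rTensor C ∘ₗ Coalgebra.comul).rTensor C (Coalgebra.comul (R := R) a))
      = F.rTensor (C ⊗[R] C)
          (Coalgebra.comul.lTensor C (Coalgebra.comul (R := R) a)) := by
        rw [LinearMap.rTensor_comp_apply, assoc_rTensor, Coalgebra.coassoc_apply]
    _ = Coalgebra.comul.lTensor M (F.rTensor C (Coalgebra.comul (R := R) a)) := by
        rw [← LinearMap.comp_apply, LinearMap.rTensor_comp_lTensor,
          ← LinearMap.lTensor_comp_rTensor, LinearMap.comp_apply]
    _ = m ⊗ₜ[R] Coalgebra.comul (R := R) a := by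
        rw [mem_integralCoideal.mp ha, LinearMap.lTensor_tmul]
    _ = _ := (assoc_mk _).symm

end Semiring

theorem isRightCoideal_integralCoideal [CommRing R] [AddCommGroup C] [Module R C]
    [Coalgebra R C] [Module.Flat R C] [AddCommGroup M] [Module R M] (F : C →ₗ[R] M) (m : M) :
    IsRightCoideal (integralCoideal F m) := fun a ha => by
  rw [← range_rTensor_subtype]
  exact mem_range_rTensor_subtype_eqLocus (rTensor_comul_eq_of_mem_integralCoideal ha)

end Coalgebra

section Bialgebra

variable {R H : Type*} [CommSemiring R] [Semiring H] [Bialgebra R H]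

theorem mem_integralCoideal_mulRight {e a : H} :
    a ∈ integralCoideal (LinearMap.mulRight R e) e ↔
      Coalgebra.comul (R := R) a * (e ⊗ₜ[R] (1 : H)) = e ⊗ₜ[R] a := by
  rw [mem_integralCoideal, rTensor_mulRight, LinearMap.mulRight_apply]

theorem mem_integralCoideal_mulLeft {e a : H} :
    a ∈ integralCoideal (LinearMap.mulLeft R e) e ↔
      (e ⊗ₜ[R] (1 : H)) * Coalgebra.comul (R := R) a = e ⊗ₜ[R] a := by
  rw [mem_integralCoideal, rTensor_mulLeft, LinearMap.mulLeft_apply]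

variable (R)

/-- The subalgebra of all `a` with `a₍₁₎ e ⊗ a₍₂₎ = e ⊗ a`; the element `e` is a left integral
for it. -/
def leftIntegralSubalgebra (e : H) : Subalgebra R H :=
  (integralCoideal (LinearMap.mulRight R e) e).toSubalgebra
    (by simp [mem_integralCoideal_mulRight, Algebra.TensorProduct.one_def])
    fun a b ha hb => by
      rw [mem_integralCoideal_mulRight] at *
      calc Coalgebra.comul (R := R) (a * b) * (e ⊗ₜ[R] (1 : H))
          = Coalgebra.comul (R := R) a * (e ⊗ₜ[R] (1 : H)) * ((1 : H) ⊗ₜ[R] b) := by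
            rw [Bialgebra.comul_mul, mul_assoc, hb, mul_assoc,
              Algebra.TensorProduct.tmul_mul_tmul, mul_one, one_mul]
        _ = e ⊗ₜ[R] (a * b) := by
            rw [ha, Algebra.TensorProduct.tmul_mul_tmul, mul_one]

/-- The subalgebra of all `a` with `e a₍₁₎ ⊗ a₍₂₎ = e ⊗ a`; the element `e` is a right integral
for it. -/
def rightIntegralSubalgebra (e : H) : Subalgebra R H :=
  (integralCoideal (LinearMap.mulLeft R e) e).toSubalgebra
    (by simp [mem_integralCoideal_mulLeft, Algebra.TensorProduct.one_def])
    fun a b ha hb => by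
      rw [mem_integralCoideal_mulLeft] at *
      calc (e ⊗ₜ[R] (1 : H)) * Coalgebra.comul (R := R) (a * b)
          = ((1 : H) ⊗ₜ[R] a) * ((e ⊗ₜ[R] (1 : H)) * Coalgebra.comul (R := R) b) := by
            rw [Bialgebra.comul_mul, ← mul_assoc, ha, ← mul_assoc,
              Algebra.TensorProduct.tmul_mul_tmul, mul_one, one_mul]
        _ = e ⊗ₜ[R] (a * b) := by
            rw [hb, Algebra.TensorProduct.tmul_mul_tmul, one_mul]

/-- The intersection of all right coideal subalgebras containing `e`, which is the smallest one
whenever a smallest one exists. -/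
def rightCoidealSubalgebraClosure (e : H) : Subalgebra R H :=
  sInf {A : Subalgebra R H | IsRightCoideal (Subalgebra.toSubmodule A) ∧ e ∈ A}

end Bialgebra

section Flat

variable {R H : Type*} [CommRing R] [Ring H] [Bialgebra R H] [Module.Flat R H] {e : H}

theorem rightCoidealSubalgebraClosure_le_leftIntegralSubalgebra
    (he : Coalgebra.comul (R := R) e * (e ⊗ₜ[R] (1 : H)) = e ⊗ₜ[R] e) :
    rightCoidealSubalgebraClosure R e ≤ leftIntegralSubalgebra R e :=
  sInf_le ⟨isRightCoideal_integralCoideal _ _, mem_integralCoideal_mulRight.mpr he⟩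

theorem rightCoidealSubalgebraClosure_le_rightIntegralSubalgebra
    (he : (e ⊗ₜ[R] (1 : H)) * Coalgebra.comul (R := R) e = e ⊗ₜ[R] e) :
    rightCoidealSubalgebraClosure R e ≤ rightIntegralSubalgebra R e :=
  sInf_le ⟨isRightCoideal_integralCoideal _ _, mem_integralCoideal_mulLeft.mpr he⟩

end Flat

theorem mul_eq_zero_of_mem_span_mul_ker {R H : Type*} [CommSemiring R] [Semiring H] [Algebra R H]
    {φ : H →ₗ[R] R} {S : Set H} {e z : H} (hS : ∀ a ∈ S, a * e = φ a • e)
    (hz : z ∈ Submodule.span R {z : H | ∃ h a : H, a ∈ S ∧ φ a = 0 ∧ z = h * a}) :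
    z * e = 0 := by
  suffices h : Submodule.span R {z : H | ∃ h a : H, a ∈ S ∧ φ a = 0 ∧ z = h * a} ≤
      LinearMap.ker (LinearMap.mulRight R e) from h hz
  rw [Submodule.span_le]
  rintro _ ⟨h, a, ha, hφ, rfl⟩
  change h * a * e = 0
  rw [mul_assoc, hS a ha, hφ, zero_smul, mul_zero]

theorem stmt14_general (R H : Type*) [CommRing R] [Ring H] [Bialgebra R H] [Module.Flat R H]
    (e : H)
    (h1 : (e ⊗ₜ[R] (1 : H)) * Coalgebra.comul (R := R) e = e ⊗ₜ[R] e)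
    (h2 : Coalgebra.comul (R := R) e * (e ⊗ₜ[R] (1 : H)) = e ⊗ₜ[R] e) :
    (∀ a ∈ rightCoidealSubalgebraClosure R e, a * e = Coalgebra.counit (R := R) a • e
      ∧ e * a = Coalgebra.counit (R := R) a • e)
    ∧ (∀ x y : H,
        x - y ∈ Submodule.span R {z : H | ∃ (h : H) (a : H),
          a ∈ rightCoidealSubalgebraClosure R e
          ∧ Coalgebra.counit (R := R) a = 0 ∧ z = h * a} →
        x * e = y * e) := by
  have left_integral : ∀ a ∈ rightCoidealSubalgebraClosure R e,
      a * e = Coalgebra.counit (R := R) a • e := fun a ha =>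
    apply_eq_counit_smul_of_mem_integralCoideal
      (rightCoidealSubalgebraClosure_le_leftIntegralSubalgebra h2 ha)
  have right_integral : ∀ a ∈ rightCoidealSubalgebraClosure R e,
      e * a = Coalgebra.counit (R := R) a • e := fun a ha =>
    apply_eq_counit_smul_of_mem_integralCoideal
      (rightCoidealSubalgebraClosure_le_rightIntegralSubalgebra h1 ha)
  refine ⟨fun a ha => ⟨left_integral a ha, right_integral a ha⟩, fun x y hxy => ?_⟩
  rw [← sub_eq_zero, ← sub_mul]
  exact mul_eq_zero_of_mem_span_mul_ker left_integral hxy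

/-- let `e ∈ H` satisfy `e·e₍₁₎ ⊗ e₍₂₎ = e ⊗ e = e₍₁₎·e ⊗ e₍₂₎` and let `A`
be the smallest right coideal subalgebra of `H` containing `e`. Then (i) `e` is a two-sided
integral for `A`: `a·e = ε(a)·e = e·a` for all `a ∈ A`; and (ii) if `x − y ∈ H·A⁺` then
`x·e = y·e`. -/
theorem stmt14 (k H : Type*) [Field k] [Ring H] [HopfAlgebra k H]
    (e : H)
    (h1 : (e ⊗ₜ[k] (1 : H)) * Coalgebra.comul (R := k) e = e ⊗ₜ[k] e)
    (h2 : Coalgebra.comul (R := k) e * (e ⊗ₜ[k] (1 : H)) = e ⊗ₜ[k] e)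
    (A : Subalgebra k H)
    (hA : ∀ a ∈ A, Coalgebra.comul (R := k) a ∈
      Submodule.span k {x : H ⊗[k] H | ∃ b ∈ A, ∃ h : H, x = b ⊗ₜ[k] h})
    (heA : e ∈ A)
    (hmin : ∀ A' : Subalgebra k H,
      (∀ a ∈ A', Coalgebra.comul (R := k) a ∈
        Submodule.span k {x : H ⊗[k] H | ∃ b ∈ A', ∃ h : H, x = b ⊗ₜ[k] h}) →
      e ∈ A' → A ≤ A') :
    (∀ a ∈ A, a * e = Coalgebra.counit (R := k) a • e
      ∧ e * a = Coalgebra.counit (R := k) a • e)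
    ∧ (∀ x y : H,
        x - y ∈ Submodule.span k {z : H | ∃ (h : H) (a : H), a ∈ A
          ∧ Coalgebra.counit (R := k) a = 0 ∧ z = h * a} →
        x * e = y * e) := by
  obtain rfl : A = rightCoidealSubalgebraClosure k e :=
    le_antisymm (le_sInf fun A' hA' => hmin A' hA'.1 hA'.2) (sInf_le ⟨hA, heA⟩)
  exact stmt14_general k H e h1 h2
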